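/- arXiv:2409.06063 — 3 statements merged into one kernel-verified Lean document; each statement's English description precedes it below -/
import Mathlib

section
/- Let G be a finite simple graph with m edges and let k be a positive integer with k ≥ m − 1. Then every k-assignment L for G satisfies P(G,L) ≥ P(G,k); consequently the minimum of P(G,L) over all k-assignments L equals P(G,k), i.e., P_ℓ(G,k) = P(G,k). -/
/-!
Whitney's broken-cycle theorem writes the number of proper colorings as a signed sum, over the
edge sets `A` containing no broken cycle, of the number of colorings constant along `A`
(`whitney_count`). For the palette `Fin k` such a term is `k ^ (n - |A|)`, since `A` is a forest.
Passing to lists loses some of these colorings. Along a forest the lists can be identified with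
`Fin k` so that equal colors in adjacent lists are identified (`exists_labelling`); then a coloring
is lost exactly when some edge `uv ∈ A` carries a color of `L u \ L v`. Writing
`w(uv) = |L u \ L v|` and using that colors of a single vertex are equidistributed, the loss lies
between `max w` and `∑ w` over `A`, times `k ^ (n - |A| - 1)` (`deficit_bounds`).

In `P(G,L) - P(G,k)` the losses enter with sign `+` for odd `|A|` and `-` for even `|A|`. Bound the
maximum from below by the average over `A` for odd sets, and use the sum for even sets. An even set
`B` then spreads its cost evenly over the odd sets `B \ {j}`; an odd set `A` is hit at most
`m - |A| ≤ k` times, and the additional factor `1 / k` in the cost of `B` makes the total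
nonnegative (`even_le_odd`).
-/


/-- `f` is a proper coloring of `G`: adjacent vertices get different colors. -/
def IsProper {V α : Type*} (G : SimpleGraph V) (f : V → α) : Prop :=
  ∀ ⦃u v : V⦄, G.Adj u v → f u ≠ f v

/-- `P(G,k)`: the number of proper colorings of `G` with colors in `Fin k`. -/
noncomputable def chromP {V : Type*} (G : SimpleGraph V) (k : ℕ) : ℕ :=
  Nat.card {f : V → Fin k // IsProper G f}

/-- `P(G,L)`: the number of proper `L`-colorings of `G`. -/
noncomputable def listP {V : Type*} (G : SimpleGraph V) (L : V → Finset ℕ) : ℕ :=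
  Nat.card {f : V → ℕ // IsProper G f ∧ ∀ v, f v ∈ L v}

/-- `u_ℓ(G,L)`: the number of equivalence classes of proper `L`-colorings of `G`,
where `f ~ g` iff `f ∘ π = g` for some automorphism `π` of `G`. -/
noncomputable def uell {V : Type*} (G : SimpleGraph V) (L : V → Finset ℕ) : ℕ :=
  Nat.card (Quot (fun f g : {f : V → ℕ // IsProper G f ∧ ∀ v, f v ∈ L v} =>
    ∃ π : G ≃g G, ∀ v, f.1 (π v) = g.1 v))

/-- `P(𝒢,k)`: the number of orbits of the action of `Aut(G)` on proper colorings
`V → Fin k` (where `π` sends `f` to `f ∘ π⁻¹`); two colorings are in the same orbit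
iff `f ∘ π = g` for some automorphism `π`. -/
noncomputable def unlabeledP {V : Type*} (G : SimpleGraph V) (k : ℕ) : ℕ :=
  Nat.card (Quot (fun f g : {f : V → Fin k // IsProper G f} =>
    ∃ π : G ≃g G, ∀ v, f.1 (π v) = g.1 v))

/-- `P_ℓ(𝒢,k)`: the minimum of `u_ℓ(G,L)` over all `k`-assignments `L` for `G`. -/
noncomputable def Pell {V : Type*} (G : SimpleGraph V) (k : ℕ) : ℕ :=
  sInf {n | ∃ L : V → Finset ℕ, (∀ v, (L v).card = k) ∧ n = uell G L}

/-! ### Broken-circuit-free edge sets -/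

section Aux

open Finset
open scoped Classical

variable {V : Type*} {m : ℕ} (s t : Fin m → V)

/-- `u` and `v` lie in the same component of the multigraph with edges `s i — t i`, `i ∈ A`.
Connectivity is expressed by duality: no vertex set that is a union of components separates
`u` from `v`. -/
def Linked (A : Finset (Fin m)) (u v : V) : Prop :=
  ∀ S : Set V, (∀ i ∈ A, (s i ∈ S ↔ t i ∈ S)) → (u ∈ S ↔ v ∈ S)

/-- `A` contains no broken circuit, a broken circuit being a cycle minus its smallest edge (edges
are ordered by their indices): no edge `i` of the graph has its ends joined by edges of `A` that
are larger than `i`. -/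
def NBC (A : Finset (Fin m)) : Prop :=
  ∀ i, ¬ Linked s t (A.filter (i < ·)) (s i) (t i)

/-- `f` is constant along every edge of `A`. -/
def ConstOn {α : Type*} (A : Finset (Fin m)) (f : V → α) : Prop :=
  ∀ i ∈ A, f (s i) = f (t i)

variable {s t}

lemma Linked.mono {A B : Finset (Fin m)} (h : A ⊆ B) {u v : V} (hl : Linked s t A u v) :
    Linked s t B u v := fun S hS => hl S fun i hi => hS i (h hi)

lemma NBC.mono {A B : Finset (Fin m)} (h : A ⊆ B) (hB : NBC s t B) : NBC s t A :=
  fun i hi => hB i (hi.mono (filter_subset_filter _ h))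

lemma Linked.eq_of_constOn {α : Type*} {A : Finset (Fin m)} {f : V → α} {u v : V}
    (hl : Linked s t A u v) (hf : ConstOn s t A f) : f u = f v := by
  have := hl {w | f w = f u} (fun i hi => by simp [hf i hi])
  simpa [eq_comm] using this

lemma nbc_empty (hst : ∀ i, s i ≠ t i) : NBC s t ∅ := by
  intro i hi
  exact hst i (by simpa [eq_comm] using hi {s i} (by simp))

/-- Toggling the smallest monochromatic edge `e` of a coloring preserves being broken-circuit-free
among sets of monochromatic edges, because the monochromatic edges form a flat. -/
lemma nbc_insert {α : Type*} {f : V → α} {A : Finset (Fin m)} {e : Fin m}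
    (hA : NBC s t A) (hf : ConstOn s t A f) (he : f (s e) = f (t e))
    (hmin : ∀ i, f (s i) = f (t i) → e ≤ i) : NBC s t (insert e A) := by
  intro i hi
  have hc : f (s i) = f (t i) := by
    refine hi.eq_of_constOn (fun j hj => ?_)
    rcases mem_insert.1 (mem_filter.1 hj).1 with rfl | h
    · exact he
    · exact hf j h
  have hle := hmin i hc
  refine hA i (hi.mono fun j hj => ?_)
  simp only [mem_filter, mem_insert] at hj ⊢
  rcases hj with ⟨rfl | h, h2⟩
  · exact absurd h2 (not_lt.2 hle)
  · exact ⟨h, h2⟩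

/-- Whitney's broken-cycle theorem for a single coloring `f`. -/
lemma whitney {α : Type*} [DecidableEq α] (hst : ∀ i, s i ≠ t i) (f : V → α) :
    ∑ A : Finset (Fin m), (if NBC s t A ∧ ConstOn s t A f then (-1 : ℚ) ^ #A else 0)
      = if ∀ i, f (s i) ≠ f (t i) then 1 else 0 := by
  split_ifs with h
  · rw [Finset.sum_eq_single ∅]
    · simp [nbc_empty hst, ConstOn]
    · intro A _ hA
      obtain ⟨i, hi⟩ := Finset.nonempty_iff_ne_empty.2 hA
      rw [if_neg]
      rintro ⟨-, hc⟩
      exact h i (hc i hi)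
    · simp
  · push Not at h
    obtain ⟨i₀, hi₀⟩ := h
    set F : Finset (Fin m) := univ.filter fun i => f (s i) = f (t i)
    have hF : F.Nonempty := ⟨i₀, by simp [F, hi₀]⟩
    have heF : f (s (F.min' hF)) = f (t (F.min' hF)) := by
      simpa [F] using F.min'_mem hF
    have hmin : ∀ i, f (s i) = f (t i) → F.min' hF ≤ i := fun i hi =>
      F.min'_le i (by simp [F, hi])
    generalize F.min' hF = e at heF hmin
    have key : ∀ A : Finset (Fin m), e ∉ A →
        ((NBC s t (insert e A) ∧ ConstOn s t (insert e A) f) ↔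
          (NBC s t A ∧ ConstOn s t A f)) := by
      intro A _
      constructor
      · rintro ⟨h1, h2⟩
        exact ⟨h1.mono (subset_insert _ _), fun i hi => h2 i (mem_insert_of_mem hi)⟩
      · rintro ⟨h1, h2⟩
        refine ⟨nbc_insert h1 h2 heF hmin, fun i hi => ?_⟩
        rcases mem_insert.1 hi with rfl | h
        · exact heF
        · exact h2 i h
    refine Finset.sum_ninvolution (fun A => if e ∈ A then A.erase e else insert e A) ?_ ?_ ?_ ?_
    · intro A
      by_cases hA : e ∈ A
      · have := key (A.erase e) (by simp)
        rw [insert_erase hA] at this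
        have hc := card_erase_add_one hA
        simp only [hA, if_true, this, ← hc, pow_succ]
        split_ifs <;> simp
      · simp only [hA, if_false, key A hA, card_insert_of_notMem hA, pow_succ]
        split_ifs <;> simp
    · intro A _ hA
      by_cases h : e ∈ A
      · rw [if_pos h] at hA
        exact absurd h (by rw [← hA]; simp)
      · rw [if_neg h] at hA
        exact h (by rw [← hA]; simp)
    · simp
    · intro A
      by_cases h : e ∈ A <;> simp [h]

/-- Whitney's broken-cycle theorem for a finite set of colorings. -/
lemma whitney_count {α : Type*} [DecidableEq α] (hst : ∀ i, s i ≠ t i) (X : Finset (V → α)) :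
    (#(X.filter fun f => ∀ i, f (s i) ≠ f (t i)) : ℚ)
      = ∑ A : Finset (Fin m),
          if NBC s t A then (-1 : ℚ) ^ #A * #(X.filter (ConstOn s t A)) else 0 := by
  rw [card_filter]
  push_cast
  simp_rw [← whitney hst]
  rw [sum_comm]
  refine sum_congr rfl fun A _ => ?_
  by_cases h : NBC s t A
  · simp only [h, true_and, if_true]
    rw [← sum_filter, sum_const, nsmul_eq_mul, mul_comm]
  · simp [h]

/-- A broken-circuit-free set is a forest: its smallest edge is a bridge. -/
lemma NBC.exists_sep {A : Finset (Fin m)} {e : Fin m} (hlt : ∀ i ∈ A, e < i)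
    (h : NBC s t (insert e A)) :
    ∃ S : Set V, (∀ i ∈ A, (s i ∈ S ↔ t i ∈ S)) ∧ s e ∉ S ∧ t e ∈ S := by
  have h1 : ¬ Linked s t A (s e) (t e) := fun hl =>
    h e (hl.mono fun i hi => by simp [hi, hlt i hi])
  simp only [Linked, not_forall] at h1
  obtain ⟨S, hS, h2⟩ := h1
  by_cases hs : s e ∈ S
  · refine ⟨Sᶜ, fun i hi => not_congr (hS i hi), by simpa using hs, ?_⟩
    intro ht
    exact h2 ⟨fun _ => ht, fun _ => hs⟩
  · exact ⟨S, hS, hs, by tauto⟩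

/-! ### Counting colorings constant along a forest -/

lemma card_constOn_insert [Fintype V] {α : Type*} [Fintype α] [AddCommGroup α]
    {A : Finset (Fin m)} {e : Fin m} (hlt : ∀ i ∈ A, e < i) (h : NBC s t (insert e A)) :
    #(univ.filter (ConstOn s t (insert e A) : (V → α) → Prop)) * Fintype.card α
      = #(univ.filter (ConstOn s t A : (V → α) → Prop)) := by
  obtain ⟨S, hS, hs, ht⟩ := h.exists_sep hlt
  rw [← card_univ (α := α), ← card_product]
  have hsh : ∀ i ∈ A, ∀ d : α, (if s i ∈ S then d else 0) = if t i ∈ S then d else 0 := by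
    intro i hi d
    simp only [hS i hi]
  -- shift a coloring by a constant on the side of the bridge `e` that contains `t e`
  refine card_nbij' (fun p w => p.1 w + if w ∈ S then p.2 else 0)
    (fun x => (fun w => x w - if w ∈ S then x (t e) - x (s e) else 0, x (t e) - x (s e)))
    ?_ ?_ ?_ ?_
  · rintro ⟨y, d⟩ hy
    simp only [coe_product, coe_filter, mem_univ, true_and, coe_univ, Set.mem_prod,
      Set.mem_ofPred_eq, Set.mem_univ, and_true] at hy ⊢
    intro i hi
    simp only [hy i (mem_insert_of_mem hi), hsh i hi]
  · intro x hx
    simp only [coe_product, coe_filter, mem_univ, true_and, coe_univ, Set.mem_prod,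
      Set.mem_ofPred_eq, Set.mem_univ, and_true] at hx ⊢
    intro i hi
    rcases mem_insert.1 hi with rfl | hi
    · simp [hs, ht]
    · simp only [hx i hi, hsh i hi]
  · rintro ⟨y, d⟩ hy
    simp only [coe_product, coe_filter, mem_univ, true_and, coe_univ, Set.mem_prod,
      Set.mem_ofPred_eq, Set.mem_univ, and_true] at hy
    have := hy e (mem_insert_self _ _)
    simp [hs, ht, this]
  · intro x _
    simp

lemma card_constOn [Fintype V] {k : ℕ} (hk : 1 ≤ k) (A : Finset (Fin m)) (h : NBC s t A) :
    (#(univ.filter (ConstOn s t A : (V → Fin k) → Prop)) : ℚ)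
      = (k : ℚ) ^ Fintype.card V / (k : ℚ) ^ #A := by
  have : NeZero k := ⟨by omega⟩
  have hk0 : (k : ℚ) ≠ 0 := by positivity
  induction A using Finset.induction_on_min with
  | empty =>
    rw [filter_true_of_mem fun x _ i hi => absurd hi (notMem_empty i)]
    simp
  | insert e A hlt ih =>
    have h1 := card_constOn_insert (α := Fin k) hlt h
    have h2 := ih (h.mono (subset_insert _ _))
    rw [← h1] at h2
    push_cast [Fintype.card_fin] at h2
    rw [card_insert_of_notMem (fun he => lt_irrefl _ (hlt e he)), pow_succ, ← div_div, ← h2]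
    field_simp

/-- The color of a fixed vertex is equidistributed. -/
lemma card_constOn_mem [Fintype V] {k : ℕ} (hk : 1 ≤ k) (A : Finset (Fin m)) (h : NBC s t A)
    (u : V) (T : Finset (Fin k)) :
    (#(univ.filter fun x : V → Fin k => ConstOn s t A x ∧ x u ∈ T) : ℚ)
      = #T * ((k : ℚ) ^ Fintype.card V / (k : ℚ) ^ (#A + 1)) := by
  have hk0 : (k : ℚ) ≠ 0 := by positivity
  set N : Fin k → ℕ := fun c => #(univ.filter fun x : V → Fin k => ConstOn s t A x ∧ x u = c)
  have hN : ∀ c d, N c = N d := by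
    intro c d
    refine card_nbij' (fun x w => Equiv.swap c d (x w)) (fun x w => Equiv.swap c d (x w))
      ?_ ?_ ?_ ?_
    · intro x hx
      simp only [coe_filter, mem_univ, true_and, Set.mem_ofPred_eq] at hx ⊢
      exact ⟨fun i hi => by simp only [hx.1 i hi], by simp [hx.2]⟩
    · intro x hx
      simp only [coe_filter, mem_univ, true_and, Set.mem_ofPred_eq] at hx ⊢
      exact ⟨fun i hi => by simp only [hx.1 i hi], by simp [hx.2]⟩
    · intro x _
      simp
    · intro x _
      simp
  have hT : ∀ T : Finset (Fin k),
      #(univ.filter fun x : V → Fin k => ConstOn s t A x ∧ x u ∈ T) = ∑ c ∈ T, N c := by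
    intro T
    rw [card_eq_sum_card_fiberwise (f := fun x : V → Fin k => x u) (t := T)]
    · refine sum_congr rfl fun c hc => ?_
      simp only [N, filter_filter]
      congr 1
      ext x
      simp only [mem_filter, mem_univ, true_and]
      constructor
      · rintro ⟨⟨h1, h2⟩, h3⟩
        exact ⟨h1, h3⟩
      · rintro ⟨h1, rfl⟩
        exact ⟨⟨h1, hc⟩, rfl⟩
    · intro x hx
      simp only [coe_filter, mem_univ, true_and, Set.mem_ofPred_eq] at hx
      exact hx.2
  let c₀ : Fin k := ⟨0, hk⟩
  have hU := hT univ
  simp only [mem_univ, and_true] at hU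
  have hC := card_constOn hk A h
  rw [hT, sum_congr rfl fun c _ => hN c c₀, sum_const, smul_eq_mul]
  rw [sum_congr rfl fun c _ => hN c c₀, sum_const, smul_eq_mul, card_univ, Fintype.card_fin] at hU
  have h3 : ((k * N c₀ : ℕ) : ℚ) = (k : ℚ) ^ Fintype.card V / (k : ℚ) ^ #A := by
    rw [← hC, ← hU]
  push_cast at h3 ⊢
  rw [pow_succ, ← div_div, ← h3]
  field_simp

/-! ### Comparing lists with a common palette -/

/-- Along a forest, all lists can be identified with one palette so that identical colors in
adjacent lists get identical names. -/
lemma exists_labelling {k : ℕ} (L : V → Finset ℕ) (hL : ∀ v, #(L v) = k)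
    (A : Finset (Fin m)) (h : NBC s t A) :
    ∃ ψ : ∀ v, Fin k ≃ L v, ∀ i ∈ A, ∀ a, (ψ (s i) a : ℕ) ∈ L (t i) →
      (ψ (t i) a : ℕ) = ψ (s i) a := by
  induction A using Finset.induction_on_min with
  | empty => exact ⟨fun v => ((L v).equivFinOfCardEq (hL v)).symm, by simp⟩
  | insert e A hlt ih =>
    obtain ⟨ψ, hψ⟩ := ih (h.mono (subset_insert _ _))
    obtain ⟨S, hS, hs, ht⟩ := h.exists_sep hlt
    obtain ⟨g, hg⟩ := Finset.exists_equiv_extend_of_card_eq (α := Fin k) (t := L (t e))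
      (by simp [hL]) (s := univ.filter fun a => (ψ (s e) a : ℕ) ∈ L (t e))
      (f := fun a => (ψ (s e) a : ℕ))
      (by
        intro c hc
        simp only [mem_image, mem_filter, mem_univ, true_and] at hc
        obtain ⟨a, ha, rfl⟩ := hc
        exact ha)
      (fun a _ b _ hab => (ψ (s e)).injective (Subtype.ext hab))
    -- relabel on the side of the bridge `e` that contains `t e`
    refine ⟨fun w => if w ∈ S then (g.trans (ψ (t e)).symm).trans (ψ w) else ψ w, ?_⟩
    intro i hi a ha
    rcases mem_insert.1 hi with rfl | hi
    · simp only [hs, ht, if_false, if_true] at ha ⊢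
      simpa using hg a (by simpa using ha)
    · by_cases hsi : s i ∈ S
      · have hti := (hS i hi).1 hsi
        simp only [hsi, hti, if_true] at ha ⊢
        exact hψ i hi _ ha
      · have hti : t i ∉ S := fun h => hsi ((hS i hi).2 h)
        simp only [hsi, hti, if_false] at ha ⊢
        exact hψ i hi _ ha

/-- For a forest `A`, the number of palette colorings constant along `A` that are lost when passing
to lists: at most a union bound over the edges, at least the contribution of any single edge. -/
lemma deficit_bounds [Fintype V] {k : ℕ} (hk : 1 ≤ k) (L : V → Finset ℕ)
    (hL : ∀ v, #(L v) = k) (A : Finset (Fin m)) (h : NBC s t A) :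
    (#(univ.filter (ConstOn s t A : (V → Fin k) → Prop)) : ℚ)
        - #((Fintype.piFinset L).filter (ConstOn s t A))
      ≤ (∑ i ∈ A, (#(L (s i) \ L (t i)) : ℚ)) * ((k : ℚ) ^ Fintype.card V / (k : ℚ) ^ (#A + 1)) ∧
    ∀ i ∈ A, (#(L (s i) \ L (t i)) : ℚ) * ((k : ℚ) ^ Fintype.card V / (k : ℚ) ^ (#A + 1)) ≤
      (#(univ.filter (ConstOn s t A : (V → Fin k) → Prop)) : ℚ)
        - #((Fintype.piFinset L).filter (ConstOn s t A)) := by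
  obtain ⟨ψ, hψ⟩ := exists_labelling L hL A h
  set Bad : (V → Fin k) → Prop := fun x => ∃ i ∈ A, (ψ (s i) (x (s i)) : ℕ) ∉ L (t i)
  have hW : #((Fintype.piFinset L).filter (ConstOn s t A))
      = #((univ.filter (ConstOn s t A : (V → Fin k) → Prop)).filter fun x => ¬ Bad x) := by
    symm
    refine card_bij (fun x _ v => (ψ v (x v) : ℕ)) ?_ ?_ ?_
    · intro x hx
      simp only [mem_filter, mem_univ, true_and, Bad, not_exists, not_and, not_not] at hx
      simp only [mem_filter, Fintype.mem_piFinset, coe_mem, implies_true, true_and]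
      intro i hi
      change (ψ (s i) (x (s i)) : ℕ) = ψ (t i) (x (t i))
      rw [← hx.1 i hi, hψ i hi _ (hx.2 i hi)]
    · intro x _ y _ hxy
      funext v
      exact (ψ v).injective (Subtype.ext (congrFun hxy v))
    · intro f hf
      simp only [mem_filter, Fintype.mem_piFinset] at hf
      have hmem : ∀ i ∈ A, f (s i) ∈ L (t i) := fun i hi => by rw [hf.2 i hi]; exact hf.1 _
      refine ⟨fun v => (ψ v).symm ⟨f v, hf.1 v⟩, ?_, by funext v; simp⟩
      simp only [mem_filter, mem_univ, true_and, Bad, not_exists, not_and, not_not]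
      refine ⟨fun i hi => ?_, fun i hi => by simpa using hmem i hi⟩
      apply (ψ (t i)).injective
      apply Subtype.ext
      rw [hψ i hi _ (by simpa using hmem i hi)]
      simpa using hf.2 i hi
  have hD : (#(univ.filter (ConstOn s t A : (V → Fin k) → Prop)) : ℚ)
        - #((Fintype.piFinset L).filter (ConstOn s t A))
      = #((univ.filter (ConstOn s t A : (V → Fin k) → Prop)).filter Bad) := by
    rw [hW, ← card_filter_add_card_filter_not (s := univ.filter _) (p := Bad)]
    push_cast
    ring
  have hedge : ∀ i, (#(univ.filter fun x : V → Fin k =>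
        ConstOn s t A x ∧ (ψ (s i) (x (s i)) : ℕ) ∉ L (t i)) : ℚ)
      = #(L (s i) \ L (t i)) * ((k : ℚ) ^ Fintype.card V / (k : ℚ) ^ (#A + 1)) := by
    intro i
    have h1 := card_constOn_mem hk A h (s i) (univ.filter fun a => (ψ (s i) a : ℕ) ∉ L (t i))
    simp only [mem_filter, mem_univ, true_and] at h1
    rw [h1]
    congr 2
    refine card_bij (fun a _ => (ψ (s i) a : ℕ)) ?_ ?_ ?_
    · intro a ha
      simpa using ha
    · intro a _ b _ hab
      exact (ψ (s i)).injective (Subtype.ext hab)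
    · intro c hc
      rw [mem_sdiff] at hc
      exact ⟨(ψ (s i)).symm ⟨c, hc.1⟩, by simpa using hc.2, by simp⟩
  rw [hD]
  constructor
  · rw [sum_mul]
    simp_rw [← hedge]
    norm_cast
    refine (card_le_card ?_).trans card_biUnion_le
    intro x hx
    simp only [mem_filter, mem_univ, true_and, Bad] at hx
    obtain ⟨hx, i, hi, hb⟩ := hx
    simp only [mem_biUnion, mem_filter, mem_univ, true_and]
    exact ⟨i, hi, hx, hb⟩
  · intro i hi
    rw [← hedge]
    norm_cast
    refine card_le_card fun x hx => ?_
    simp only [mem_filter, mem_univ, true_and, Bad] at hx ⊢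
    exact ⟨hx.1, i, hi, hx.2⟩

/-! ### Odd sets pay for even sets -/

lemma sum_erase_comm (g : Finset (Fin m) → ℚ) :
    ∑ B : Finset (Fin m), ∑ j ∈ B, g (B.erase j)
      = ∑ A : Finset (Fin m), ((m : ℚ) - #A) * g A := by
  have h1 : ∀ A : Finset (Fin m), ((m : ℚ) - #A) * g A = ∑ j ∈ Aᶜ, g A := by
    intro A
    rw [sum_const, nsmul_eq_mul, card_compl, Fintype.card_fin,
      Nat.cast_sub (by simpa using card_le_univ A)]
  simp_rw [h1]
  rw [sum_sigma', sum_sigma']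
  refine sum_bij' (fun p _ => ⟨p.1.erase p.2, p.2⟩) (fun p _ => ⟨insert p.2 p.1, p.2⟩)
    ?_ ?_ ?_ ?_ ?_
  · rintro ⟨B, j⟩ h
    simp
  · rintro ⟨A, j⟩ h
    simp
  · rintro ⟨B, j⟩ h
    simp only [mem_sigma, mem_univ, true_and] at h
    simp [insert_erase h]
  · rintro ⟨A, j⟩ h
    simp only [mem_sigma, mem_univ, true_and, mem_compl] at h
    simp [erase_insert h]
  · rintro ⟨B, j⟩ h
    rfl

lemma sum_erase_weight (w : Fin m → ℚ) (B : Finset (Fin m)) :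
    ∑ j ∈ B, ∑ i ∈ B.erase j, w i = ((#B : ℚ) - 1) * ∑ i ∈ B, w i := by
  have : ∀ j ∈ B, ∑ i ∈ B.erase j, w i = ∑ i ∈ B, w i - w j := fun j hj => by
    rw [← sum_erase_add B w hj]; ring
  rw [sum_congr rfl this, sum_sub_distrib, sum_const, nsmul_eq_mul]
  ring

/-- For an edge set `A` with `w`-weight `S A`, the total of `S B / k ^ (#B + 1)` over even
members `B` of a hereditary family is at most the total of `S A / (#A * k ^ (#A + 1))` over the odd
members `A`: each `B` distributes its value evenly over the sets `B \ {j}`, and each odd `A` is of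
this form in at most `m - #A ≤ k` ways. -/
lemma even_le_odd (N : Finset (Fin m) → Prop) (hN : ∀ A B, A ⊆ B → N B → N A)
    (w : Fin m → ℚ) (hw : ∀ i, 0 ≤ w i) {k : ℕ} (hk : 1 ≤ k) (hmk : m ≤ k + 1) :
    ∑ B : Finset (Fin m), (if N B ∧ Even #B then (∑ i ∈ B, w i) / (k : ℚ) ^ (#B + 1) else 0) ≤
    ∑ A : Finset (Fin m),
      if N A ∧ Odd #A then (∑ i ∈ A, w i) / (#A * (k : ℚ) ^ (#A + 1)) else 0 := by
  have hk0 : (0 : ℚ) < k := by positivity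
  set g : Finset (Fin m) → ℚ := fun A =>
    if N A ∧ Odd #A then (∑ i ∈ A, w i) / (#A * (k : ℚ) ^ (#A + 1)) / k else 0 with hg
  have hg0 : ∀ A, 0 ≤ g A := by
    intro A
    have := sum_nonneg fun i (_ : i ∈ A) => hw i
    simp only [hg]
    split_ifs <;> positivity
  calc _ ≤ ∑ B : Finset (Fin m), ∑ j ∈ B, g (B.erase j) := by
        refine sum_le_sum fun B _ => ?_
        split_ifs with h
        · obtain ⟨h1, h2⟩ := h
          rcases B.eq_empty_or_nonempty with rfl | hne
          · simp
          have hb : 1 < #B := by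
            have := hne.card_pos
            rcases h2 with ⟨r, hr⟩
            omega
          have hb' : (0 : ℚ) < #B - 1 := by
            have : (1 : ℚ) < #B := by exact_mod_cast hb
            linarith
          have : ∀ j ∈ B, g (B.erase j)
              = (∑ i ∈ B.erase j, w i) / (((#B : ℚ) - 1) * (k : ℚ) ^ (#B + 1)) := by
            intro j hj
            have hc : #(B.erase j) + 1 = #B := card_erase_add_one hj
            have hodd : Odd #(B.erase j) := by
              rw [← hc] at h2
              simpa [Nat.even_add_one] using h2
            have hcq : (#(B.erase j) : ℚ) = #B - 1 := by
              rw [← hc]; push_cast; ring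
            simp only [hg]
            rw [if_pos ⟨hN _ _ (erase_subset _ _) h1, hodd⟩, hcq, hc, div_div, pow_succ, mul_assoc]
          rw [sum_congr rfl this, ← sum_div, sum_erase_weight]
          rw [mul_div_mul_left _ _ hb'.ne']
        · exact sum_nonneg fun j _ => hg0 _
    _ = ∑ A : Finset (Fin m), ((m : ℚ) - #A) * g A := sum_erase_comm g
    _ ≤ ∑ A : Finset (Fin m), k * g A := by
        refine sum_le_sum fun A _ => ?_
        by_cases hA : N A ∧ Odd #A
        · refine mul_le_mul_of_nonneg_right ?_ (hg0 A)
          have h1 : (1 : ℚ) ≤ #A := by exact_mod_cast hA.2.pos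
          have h2 : (m : ℚ) ≤ k + 1 := by exact_mod_cast hmk
          linarith
        · simp [hg, hA]
    _ = _ := by
        refine sum_congr rfl fun A _ => ?_
        simp only [hg]
        split_ifs
        · field_simp
        · simp

lemma proper_count_le [Fintype V] {k : ℕ} (hk : 1 ≤ k) (hmk : m ≤ k + 1)
    (hst : ∀ i, s i ≠ t i) (L : V → Finset ℕ) (hL : ∀ v, #(L v) = k) :
    #(univ.filter fun f : V → Fin k => ∀ i, f (s i) ≠ f (t i)) ≤
      #((Fintype.piFinset L).filter fun f => ∀ i, f (s i) ≠ f (t i)) := by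
  rw [← Nat.cast_le (α := ℚ), whitney_count hst, whitney_count hst, ← sub_nonneg,
    ← sum_sub_distrib]
  set w : Fin m → ℚ := fun i => (#(L (s i) \ L (t i)) : ℚ) with hw
  have key := even_le_odd (NBC s t) (fun A B h => NBC.mono h) w (fun i => by positivity) hk hmk
  rw [← sub_nonneg, ← sum_sub_distrib] at key
  have hK : (0 : ℚ) ≤ (k : ℚ) ^ Fintype.card V := by positivity
  have key2 := mul_nonneg hK key
  rw [mul_sum] at key2
  refine key2.trans (sum_le_sum fun A _ => ?_)
  by_cases hA : NBC s t A
  swap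
  · simp [hA]
  obtain ⟨hup, hlow⟩ := deficit_bounds hk L hL A hA
  rcases Nat.even_or_odd #A with he | ho
  · have : ¬ Odd #A := by simpa using he
    simp only [hA, he, this, true_and, if_true, and_false, if_false, he.neg_one_pow]
    calc _ = -((∑ i ∈ A, w i) * ((k : ℚ) ^ Fintype.card V / (k : ℚ) ^ (#A + 1))) := by ring
      _ ≤ _ := by linarith
  · have : ¬ Even #A := by simpa using ho
    simp only [hA, ho, this, true_and, if_true, and_false, if_false, ho.neg_one_pow]
    have ha : (0 : ℚ) < #A := by exact_mod_cast ho.pos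
    have hs := sum_le_sum hlow
    rw [← sum_mul, sum_const, nsmul_eq_mul] at hs
    calc _ = (∑ i ∈ A, w i) * ((k : ℚ) ^ Fintype.card V / (k : ℚ) ^ (#A + 1)) / #A := by
          field_simp
          ring
      _ ≤ _ := by
          rw [div_le_iff₀ ha]
          linarith

end Aux

lemma chromP_le_listP {V : Type*} [Fintype V] (G : SimpleGraph V) {m k : ℕ}
    (hm : Nat.card G.edgeSet = m) (hk1 : 1 ≤ k) (hk : m - 1 ≤ k) (L : V → Finset ℕ)
    (hL : ∀ v, (L v).card = k) : chromP G k ≤ listP G L := by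
  classical
  let e : Fin m ≃ G.edgeSet := (Finite.equivFinOfCardEq hm).symm
  set s : Fin m → V := fun i => (e i).1.out.1
  set t : Fin m → V := fun i => (e i).1.out.2
  have hmk : ∀ i, s(s i, t i) = (e i).1 := fun i => Quot.out_eq _
  have hadj : ∀ i, G.Adj (s i) (t i) := fun i => by
    rw [← SimpleGraph.mem_edgeSet, hmk]
    exact (e i).2
  have hprop : ∀ {α : Type} (f : V → α), IsProper G f ↔ ∀ i, f (s i) ≠ f (t i) := by
    intro α f
    refine ⟨fun h i => h (hadj i), fun h u v huv => ?_⟩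
    have h1 := hmk (e.symm ⟨s(u, v), huv⟩)
    rw [Equiv.apply_symm_apply] at h1
    have h2 := h (e.symm ⟨s(u, v), huv⟩)
    rcases Sym2.eq_iff.1 h1 with ⟨h3, h4⟩ | ⟨h3, h4⟩
    · rwa [h3, h4] at h2
    · rw [h3, h4] at h2
      exact h2.symm
  have := proper_count_le hk1 (by omega) (fun i => (hadj i).ne) L hL
  convert this using 1
  · rw [chromP, Nat.card_eq_fintype_card, Fintype.card_subtype]
    simp_rw [hprop]
  · rw [listP]
    refine Nat.subtype_card _ fun f => ?_
    simp only [Finset.mem_filter, Fintype.mem_piFinset, hprop]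
    exact and_comm

lemma listP_range {V : Type*} (G : SimpleGraph V) (k : ℕ) :
    listP G (fun _ => Finset.range k) = chromP G k := by
  refine Nat.card_congr
    { toFun := fun f => ⟨fun v => ⟨f.1 v, Finset.mem_range.1 (f.2.2 v)⟩, fun u v h heq =>
        f.2.1 h (congrArg Fin.val heq)⟩
      invFun := fun f => ⟨fun v => f.1 v, fun u v h heq => f.2 h (Fin.ext heq),
        fun v => Finset.mem_range.2 (f.1 v).2⟩
      left_inv := fun f => rfl
      right_inv := fun f => rfl }

/-- list color function equals chromatic polynomial for `k ≥ m - 1`.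
If `G` has `m` edges and `k ≥ m - 1` is a positive integer, then every `k`-assignment
`L` satisfies `P(G,L) ≥ P(G,k)`; consequently `P_ℓ(G,k) = P(G,k)`. -/
theorem statement_14 {V : Type*} [Fintype V] (G : SimpleGraph V) (m k : ℕ)
    (hm : Nat.card G.edgeSet = m) (hk1 : 1 ≤ k) (hk : m - 1 ≤ k) :
    (∀ L : V → Finset ℕ, (∀ v, (L v).card = k) → chromP G k ≤ listP G L) ∧
    sInf {n | ∃ L : V → Finset ℕ, (∀ v, (L v).card = k) ∧ n = listP G L} =
      chromP G k := by
  have h1 := fun L hL => chromP_le_listP G hm hk1 hk L hL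
  refine ⟨h1, le_antisymm ?_ ?_⟩
  · exact Nat.sInf_le ⟨fun _ => Finset.range k, fun _ => Finset.card_range k, (listP_range G k).symm⟩
  · refine le_csInf ⟨_, fun _ => Finset.range k, fun _ => Finset.card_range k, rfl⟩ ?_
    rintro n ⟨L, hL, rfl⟩
    exact h1 L hL
end

section
/- Let G₁ and G₂ be connected finite simple graphs that are not isomorphic, let G be their disjoint union, let L be a k-assignment for G, and let L₁ and L₂ be the restrictions of L to V(G₁) and V(G₂) respectively. Then u_ℓ(G,L) = u_ℓ(G₁,L₁) · u_ℓ(G₂,L₂). -/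
/-- The image of a connected graph under a homomorphism into a disjoint union lies in one of the
two summands. -/
lemma hom_sum_sides {V A B : Type*} {G : SimpleGraph V} {H₁ : SimpleGraph A} {H₂ : SimpleGraph B}
    (hG : G.Connected) (φ : G →g H₁ ⊕g H₂) :
    (∀ v, ∃ a, φ v = Sum.inl a) ∨ (∀ v, ∃ b, φ v = Sum.inr b) := by
  obtain ⟨v₀⟩ := hG.nonempty
  have key := fun v => (hG.preconnected v₀ v).map φ
  rcases h₀ : φ v₀ with a | b
  · refine Or.inl fun v => ?_
    rcases h : φ v with a' | b'
    · exact ⟨a', rfl⟩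
    · exact absurd (h ▸ h₀ ▸ key v) (SimpleGraph.not_reachable_sum_inl_inr _ _)
  · refine Or.inr fun v => ?_
    rcases h : φ v with a' | b'
    · exact absurd (h ▸ h₀ ▸ key v).symm (SimpleGraph.not_reachable_sum_inl_inr _ _)
    · exact ⟨b', rfl⟩

/-- An isomorphism of disjoint unions that maps left to left and right to right restricts to an
isomorphism of the left summands. -/
lemma exists_iso_left {V W A B : Type*} {G₁ : SimpleGraph V} {G₂ : SimpleGraph W}
    {H₁ : SimpleGraph A} {H₂ : SimpleGraph B} (φ : G₁ ⊕g G₂ ≃g H₁ ⊕g H₂)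
    (hl : ∀ v, ∃ a, φ (Sum.inl v) = Sum.inl a) (hr : ∀ w, ∃ b, φ (Sum.inr w) = Sum.inr b) :
    ∃ ψ : G₁ ≃g H₁, ∀ v, φ (Sum.inl v) = Sum.inl (ψ v) := by
  choose f hf using hl
  choose g hg using hr
  have hbij : Function.Bijective f := by
    constructor
    · intro u v h
      exact Sum.inl_injective (φ.injective (by rw [hf, hf, h]))
    · intro a
      obtain ⟨v | w, h⟩ := φ.surjective (Sum.inl a)
      · exact ⟨v, Sum.inl_injective ((hf v).symm.trans h)⟩
      · simp [hg] at h
  refine ⟨⟨Equiv.ofBijective f hbij, fun {u v} => ?_⟩, hf⟩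
  have h := φ.map_adj_iff (v := Sum.inl u) (w := Sum.inl v)
  rw [hf, hf] at h
  simpa using h

/-- Every automorphism of the disjoint union of two non-isomorphic connected graphs is the sum of
automorphisms of the two graphs. -/
lemma exists_iso_components {V W : Type*} {G₁ : SimpleGraph V} {G₂ : SimpleGraph W}
    (h₁ : G₁.Connected) (h₂ : G₂.Connected) (hiso : IsEmpty (G₁ ≃g G₂))
    (π : G₁ ⊕g G₂ ≃g G₁ ⊕g G₂) :
    ∃ (ψ₁ : G₁ ≃g G₁) (ψ₂ : G₂ ≃g G₂), (∀ v, π (Sum.inl v) = Sum.inl (ψ₁ v)) ∧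
      ∀ w, π (Sum.inr w) = Sum.inr (ψ₂ w) := by
  obtain ⟨v₀⟩ := h₁.nonempty
  obtain ⟨w₀⟩ := h₂.nonempty
  have H₁ : (∀ v, ∃ a, π (Sum.inl v) = Sum.inl a) ∨ (∀ v, ∃ b, π (Sum.inl v) = Sum.inr b) :=
    hom_sum_sides h₁ (π.toHom.comp SimpleGraph.Embedding.sumInl.toHom)
  have H₂ : (∀ w, ∃ a, π (Sum.inr w) = Sum.inl a) ∨ (∀ w, ∃ b, π (Sum.inr w) = Sum.inr b) :=
    hom_sum_sides h₂ (π.toHom.comp SimpleGraph.Embedding.sumInr.toHom)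
  rcases H₁ with hl | hl <;> rcases H₂ with hr | hr
  -- Both summands sent to the left: `inr w₀` is not in the image.
  · obtain ⟨v | w, h⟩ := π.surjective (Sum.inr w₀)
    · obtain ⟨a, ha⟩ := hl v
      simp [ha] at h
    · obtain ⟨a, ha⟩ := hr w
      simp [ha] at h
  · obtain ⟨ψ₁, hψ₁⟩ := exists_iso_left π hl hr
    -- The right-hand restriction is the left-hand one after conjugation by the swap.
    obtain ⟨ψ₂, hψ₂⟩ := exists_iso_left
      ((SimpleGraph.Iso.sumComm.trans π).trans SimpleGraph.Iso.sumComm)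
      (fun w => (hr w).imp fun b hb => by simp [hb])
      (fun v => (hl v).imp fun a ha => by simp [ha])
    refine ⟨ψ₁, ψ₂, hψ₁, fun w => ?_⟩
    obtain ⟨b, hb⟩ := hr w
    have h := hψ₂ w
    simp only [RelIso.trans_apply, SimpleGraph.Iso.sumComm_apply, Sum.swap_inl, hb,
      Sum.swap_inr] at h
    rw [hb, Sum.inl_injective h]
  -- Summands interchanged: composing with the swap gives an isomorphism `G₁ ≃g G₂`.
  · obtain ⟨ψ, -⟩ := exists_iso_left (π.trans SimpleGraph.Iso.sumComm)
      (fun v => (hl v).imp fun b hb => by simp [hb])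
      (fun w => (hr w).imp fun a ha => by simp [ha])
    exact hiso.elim ψ
  -- Both summands sent to the right: `inl v₀` is not in the image.
  · obtain ⟨v | w, h⟩ := π.surjective (Sum.inl v₀)
    · obtain ⟨a, ha⟩ := hl v
      simp [ha] at h
    · obtain ⟨a, ha⟩ := hr w
      simp [ha] at h

/-- `u_ℓ` is multiplicative over non-isomorphic connected components.
If `G` is the disjoint union of connected non-isomorphic graphs `G₁`, `G₂` and `L` is a
`k`-assignment for `G` with restrictions `L₁`, `L₂`, then
`u_ℓ(G,L) = u_ℓ(G₁,L₁) * u_ℓ(G₂,L₂)`. -/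
theorem statement_15 {V₁ V₂ : Type*} [Fintype V₁] [Fintype V₂]
    (G₁ : SimpleGraph V₁) (G₂ : SimpleGraph V₂)
    (h₁ : G₁.Connected) (h₂ : G₂.Connected) (hiso : IsEmpty (G₁ ≃g G₂))
    (k : ℕ) (L : V₁ ⊕ V₂ → Finset ℕ) (hL : ∀ v, (L v).card = k) :
    uell (G₁ ⊕g G₂) L =
      uell G₁ (fun v => L (Sum.inl v)) * uell G₂ (fun v => L (Sum.inr v)) := by
  rw [uell, uell, uell, ← Nat.card_prod]
  refine Nat.card_congr
    { toFun := Quot.lift (fun f => (Quot.mk _ ⟨fun v => f.1 (Sum.inl v), ?_, fun v => f.2.2 _⟩,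
        Quot.mk _ ⟨fun w => f.1 (Sum.inr w), ?_, fun w => f.2.2 _⟩)) ?_
      invFun := fun p => Quot.lift₂ (fun f g => Quot.mk _ ⟨Sum.elim f.1 g.1, ?_, ?_⟩) ?_ ?_ p.1 p.2
      left_inv := ?_
      right_inv := ?_ }
  · intro u v h
    exact f.2.1 (SimpleGraph.sum_adj_inl.2 h)
  · intro u v h
    exact f.2.1 (SimpleGraph.sum_adj_inr.2 h)
  · rintro f g ⟨π, hπ⟩
    obtain ⟨ψ₁, ψ₂, hl, hr⟩ := exists_iso_components h₁ h₂ hiso π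
    refine Prod.ext (Quot.sound ⟨ψ₁, fun v => ?_⟩) (Quot.sound ⟨ψ₂, fun w => ?_⟩)
    · simpa [hl] using hπ (Sum.inl v)
    · simpa [hr] using hπ (Sum.inr w)
  · rintro (u | u) (v | v) h
    · exact f.2.1 (SimpleGraph.sum_adj_inl.1 h)
    · simp at h
    · simp at h
    · exact g.2.1 (SimpleGraph.sum_adj_inr.1 h)
  · rintro (v | w)
    · exact f.2.2 v
    · exact g.2.2 w
  · rintro f g g' ⟨π, hπ⟩
    refine Quot.sound ⟨SimpleGraph.Iso.sumCongr SimpleGraph.Iso.refl π, ?_⟩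
    rintro (v | w)
    · rfl
    · exact hπ w
  · rintro f f' g ⟨π, hπ⟩
    refine Quot.sound ⟨SimpleGraph.Iso.sumCongr π SimpleGraph.Iso.refl, ?_⟩
    rintro (v | w)
    · exact hπ v
    · rfl
  · rintro ⟨f⟩
    exact congrArg (Quot.mk _) (Subtype.ext (Sum.elim_comp_inl_inr f.1))
  · rintro ⟨⟨f⟩, ⟨g⟩⟩
    rfl
end

section
/- Let G be a finite simple graph with n vertices, n ≥ 1. Then there exists a polynomial p with rational coefficients of degree n and leading coefficient 1/|Aut(G)| such that for every k ∈ ℕ, p evaluated at k equals the number of orbits of the action of Aut(G) on proper colorings f : V(G) → {1,…,k} (where π ∈ Aut(G) sends f to f∘π⁻¹). -/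
/-- The relations that arise as kernels of proper colorings `f` with `f ∘ π = f`: no two adjacent
vertices are equivalent, and every vertex is equivalent to its image under `π`. -/
def IsGood {V : Type*} (G : SimpleGraph V) (π : G ≃g G) (s : Setoid V) : Prop :=
  (∀ ⦃u v : V⦄, G.Adj u v → ¬ s u v) ∧ ∀ v, s (π v) v

/-- The colorings with kernel `s` are the injections of the quotient by `s` into the colors. -/
def kerEqEquiv {V α : Type*} (s : Setoid V) :
    {f : V → α // Setoid.ker f = s} ≃ (Quotient s ↪ α) where
  toFun f := ⟨Quotient.lift f.1 fun a b h => by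
      have h' : s a b := h
      rwa [← f.2] at h', by
    rintro ⟨a⟩ ⟨b⟩ h
    refine Quotient.sound ?_
    change s a b
    rw [← f.2]
    exact h⟩
  invFun g := ⟨fun v => g (Quotient.mk s v), by
    ext a b
    rw [Setoid.ker_def, g.injective.eq_iff]
    exact Quotient.eq⟩
  left_inv f := rfl
  right_inv g := by
    ext ⟨a⟩
    rfl

theorem card_coloring_ker_eq {V : Type*} [Finite V] (s : Setoid V) (k : ℕ) :
    Nat.card {f : V → Fin k // Setoid.ker f = s} = k.descFactorial (Nat.card (Quotient s)) := by
  classical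
  have := Fintype.ofFinite (Quotient s)
  rw [Nat.card_congr (kerEqEquiv s), Nat.card_eq_fintype_card, Fintype.card_embedding_eq,
    Fintype.card_fin, Nat.card_eq_fintype_card]

instance finite_setoid {V : Type*} [Finite V] : Finite (Setoid V) :=
  Finite.of_injective (fun s : Setoid V => (s : V → V → Prop)) fun _ _ h =>
    Setoid.ext fun a b => iff_of_eq (congrFun (congrFun h a) b)

noncomputable instance fintype_setoid {V : Type*} [Finite V] : Fintype (Setoid V) :=
  Fintype.ofFinite _

open Classical in
/-- A property of colorings that depends only on the kernel is counted by falling factorials. -/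
theorem card_coloring_of_ker {V : Type*} [Finite V] (P : Setoid V → Prop) (k : ℕ) :
    Nat.card {f : V → Fin k // P (Setoid.ker f)} =
      ∑ s : Setoid V with P s, k.descFactorial (Nat.card (Quotient s)) := by
  have := Fintype.ofFinite V
  rw [Nat.card_eq_fintype_card, Fintype.card_subtype,
    Finset.card_eq_sum_card_fiberwise (f := fun f : V → Fin k => Setoid.ker f)
      (t := Finset.univ.filter P) (fun f hf => by simpa using hf)]
  refine Finset.sum_congr rfl fun s hs => ?_
  rw [← card_coloring_ker_eq, Nat.card_eq_fintype_card, Fintype.card_subtype, Finset.filter_filter]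
  congr 1
  ext f
  simp only [Finset.mem_filter, Finset.mem_univ, true_and] at hs ⊢
  exact ⟨fun h => h.2, fun h => ⟨h ▸ hs, h⟩⟩

/-- The action of `Aut(G)` on proper colorings in which `π` sends `f` to `f ∘ π⁻¹`. -/
instance colorAction {V α : Type*} (G : SimpleGraph V) :
    MulAction (G ≃g G) {f : V → α // IsProper G f} where
  smul π f := ⟨fun v => f.1 (π⁻¹ v), fun _ _ h => f.2 ((π⁻¹).map_adj_iff.2 h)⟩
  one_smul f := rfl
  mul_smul π ρ f := Subtype.ext <| funext fun v => by
    change f.1 ((π * ρ)⁻¹ v) = f.1 (ρ⁻¹ (π⁻¹ v))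
    rw [mul_inv_rev]
    rfl

theorem colorAction_apply {V α : Type*} (G : SimpleGraph V) (π : G ≃g G)
    (f : {f : V → α // IsProper G f}) (v : V) : (π • f).1 v = f.1 (π⁻¹ v) := rfl

theorem smul_eq_iff_comp {V α : Type*} (G : SimpleGraph V) (π : G ≃g G)
    (f g : {f : V → α // IsProper G f}) : π • g = f ↔ ∀ v, f.1 (π v) = g.1 v := by
  constructor
  · rintro rfl v
    rw [colorAction_apply, RelIso.inv_apply_self]
  · intro h
    ext v
    rw [colorAction_apply, ← h, RelIso.apply_inv_self]

theorem unlabeledP_eq_card_orbits {V : Type*} (G : SimpleGraph V) (k : ℕ) :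
    unlabeledP G k =
      Nat.card (Quotient (MulAction.orbitRel (G ≃g G) {f : V → Fin k // IsProper G f})) := by
  refine Nat.card_congr (Quot.congrRight fun f g => ?_)
  change _ ↔ f ∈ MulAction.orbit _ g
  simp only [MulAction.mem_orbit_iff, smul_eq_iff_comp]

open Classical in
theorem card_fixedBy {V : Type*} [Finite V] (G : SimpleGraph V) (k : ℕ) (π : G ≃g G) :
    Nat.card (MulAction.fixedBy {f : V → Fin k // IsProper G f} π) =
      ∑ s : Setoid V with IsGood G π s, k.descFactorial (Nat.card (Quotient s)) := by
  rw [← card_coloring_of_ker]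
  refine Nat.card_congr ((Equiv.subtypeEquivRight fun f => smul_eq_iff_comp G π f f).trans
    (Equiv.subtypeSubtypeEquivSubtypeInter (IsProper G) fun f => ∀ v, f (π v) = f v))

theorem card_quotient_eq_iff {V : Type*} [Finite V] (s : Setoid V) :
    Nat.card (Quotient s) = Nat.card V ↔ s = ⊥ := by
  constructor
  · intro h
    have hb : Function.Bijective (Quotient.mk s) :=
      (Nat.bijective_iff_surjective_and_card _).2 ⟨Quotient.mk_surjective, h.symm⟩
    ext a b
    exact ⟨fun hab => hb.1 (Quotient.sound hab), fun hab => hab ▸ s.refl a⟩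
  · rintro rfl
    exact (Nat.card_congr (Equiv.ofBijective (Quotient.mk ⊥)
      ⟨fun a b h => Quotient.exact h, Quotient.mk_surjective⟩)).symm

theorem card_quotient_le {V : Type*} [Finite V] (s : Setoid V) :
    Nat.card (Quotient s) ≤ Nat.card V :=
  Nat.card_le_card_of_surjective _ Quotient.mk_surjective

theorem isGood_bot_iff {V : Type*} (G : SimpleGraph V) (π : G ≃g G) :
    IsGood G π ⊥ ↔ π = 1 := by
  constructor
  · intro h
    ext v
    exact h.2 v
  · rintro rfl
    exact ⟨fun u v h e => h.ne e, fun v => rfl⟩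

noncomputable instance fintype_aut {V : Type*} [Finite V] (G : SimpleGraph V) :
    Fintype (G ≃g G) :=
  have : Finite (G ≃g G) := Finite.of_injective (fun π v => π v) DFunLike.coe_injective
  Fintype.ofFinite _

open Classical in
/-- The polynomial counting pairs of an automorphism and a proper coloring fixed by it. -/
noncomputable def burnsideSum {V : Type*} [Finite V] (G : SimpleGraph V) : Polynomial ℚ :=
  ∑ π : G ≃g G, ∑ s : Setoid V with IsGood G π s, descPochhammer ℚ (Nat.card (Quotient s))

theorem eval_burnsideSum {V : Type*} [Finite V] (G : SimpleGraph V) (k : ℕ) :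
    (burnsideSum G).eval (k : ℚ) = unlabeledP G k * Nat.card (G ≃g G) := by
  classical
  have := Fintype.ofFinite V
  have := Fintype.ofFinite
    (Quotient (MulAction.orbitRel (G ≃g G) {f : V → Fin k // IsProper G f}))
  have h := MulAction.sum_card_fixedBy_eq_card_orbits_mul_card_group (G ≃g G)
    {f : V → Fin k // IsProper G f}
  simp only [← Nat.card_eq_fintype_card] at h
  rw [unlabeledP_eq_card_orbits, burnsideSum]
  simp only [Polynomial.eval_finsetSum, descPochhammer_eval_eq_descFactorial]
  simp only [card_fixedBy] at h
  exact_mod_cast h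

theorem natDegree_burnsideSum_le {V : Type*} [Finite V] (G : SimpleGraph V) :
    (burnsideSum G).natDegree ≤ Nat.card V := by
  refine Polynomial.natDegree_sum_le_of_forall_le _ _ fun π _ =>
    Polynomial.natDegree_sum_le_of_forall_le _ _ fun s _ => ?_
  rw [descPochhammer_natDegree]
  exact card_quotient_le s

theorem coeff_descPochhammer_quotient {V : Type*} [Finite V] (s : Setoid V) [Decidable (s = ⊥)] :
    (descPochhammer ℚ (Nat.card (Quotient s))).coeff (Nat.card V) = if s = ⊥ then 1 else 0 := by
  split_ifs with h
  · rw [← (card_quotient_eq_iff s).2 h]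
    have := (monic_descPochhammer ℚ (Nat.card (Quotient s))).coeff_natDegree
    rwa [descPochhammer_natDegree] at this
  · refine Polynomial.coeff_eq_zero_of_natDegree_lt ?_
    rw [descPochhammer_natDegree]
    exact lt_of_le_of_ne (card_quotient_le s) fun e => h ((card_quotient_eq_iff s).1 e)

/-- Only the identity automorphism with the discrete relation contributes in degree `|V|`. -/
theorem coeff_burnsideSum {V : Type*} [Finite V] (G : SimpleGraph V) :
    (burnsideSum G).coeff (Nat.card V) = 1 := by
  classical
  simp only [burnsideSum, Polynomial.finsetSum_coeff, coeff_descPochhammer_quotient,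
    Finset.sum_ite_eq', Finset.mem_filter, Finset.mem_univ, true_and, isGood_bot_iff, if_true]

/-- the unlabeled chromatic polynomial is a polynomial.
For a finite simple graph `G` on `n ≥ 1` vertices, there is a polynomial `p` over `ℚ`
of degree `n` with leading coefficient `1 / |Aut(G)|` such that for every `k`,
`p(k)` equals the number of orbits of `Aut(G)` acting on proper `k`-colorings of `G`. -/
theorem statement_19 {V : Type*} [Fintype V] (G : SimpleGraph V) (n : ℕ)
    (hn : Fintype.card V = n) (hn1 : 1 ≤ n) :
    ∃ p : Polynomial ℚ, p.degree = n ∧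
      p.leadingCoeff = 1 / (Nat.card (G ≃g G) : ℚ) ∧
      ∀ k : ℕ, p.eval (k : ℚ) = unlabeledP G k := by
  have hA : (Nat.card (G ≃g G) : ℚ) ≠ 0 := Nat.cast_ne_zero.2 Nat.card_pos.ne'
  rw [← Nat.card_eq_fintype_card] at hn
  subst hn
  have hd : (burnsideSum G).degree = Nat.card V :=
    Polynomial.degree_eq_of_le_of_coeff_ne_zero
      (Polynomial.natDegree_le_iff_degree_le.1 (natDegree_burnsideSum_le G))
      (by rw [coeff_burnsideSum]; exact one_ne_zero)
  refine ⟨Polynomial.C (1 / (Nat.card (G ≃g G) : ℚ)) * burnsideSum G, ?_, ?_, fun k => ?_⟩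
  · rw [Polynomial.degree_C_mul (one_div_ne_zero hA), hd]
  · rw [Polynomial.leadingCoeff_mul, Polynomial.leadingCoeff_C, Polynomial.leadingCoeff,
      Polynomial.natDegree_eq_of_degree_eq_some hd, coeff_burnsideSum, mul_one]
  · rw [Polynomial.eval_mul, Polynomial.eval_C, eval_burnsideSum]
    field_simp
end
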